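/- Let G = (V, E) be a finite simple undirected graph, let k be a positive integer, and let y assign to every unordered pair {i, j} of distinct vertices a value y_{ij} ∈ {0, 1}. Suppose that (i) for all pairwise distinct i, j, k ∈ V the triangle inequalities y_{ij} + y_{jk} − y_{ik} ≤ 1, y_{ij} − y_{jk} + y_{ik} ≤ 1 and −y_{ij} + y_{jk} + y_{ik} ≤ 1 hold; and (ii) for every vertex i ∈ V, the number of vertices j ≠ i with (i, j) ∉ E and y_{ij} = 1 is at most k − 1. Then the relation on V defined by i ∼ j ⟺ (i = j or y_{ij} = 1) is an equivalence relation, and every equivalence class of ∼ is a k-plex of G. Consequently, the integral feasible solutions of formulation Fks are exactly the k-plex partitions of G. -/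

import Mathlib

/-- `S` is a `k`-plex of `G` if every vertex of the subgraph induced by `S`
has degree at least `|S| - k` in that induced subgraph. -/
def IsKPlex {V : Type*} [DecidableEq V] (G : SimpleGraph V) [DecidableRel G.Adj]
    (k : ℕ) (S : Finset V) : Prop :=
  ∀ i ∈ S, S.card - k ≤ (S.filter (fun j => G.Adj i j)).card

/-- Integral feasible solutions of formulation Fks are exactly the `k`-plex partitions:
if a symmetric binary assignment `y` on all pairs of distinct vertices satisfies the
triangle inequalities on all triples and, for each vertex `i`, at most `k - 1` missing
edges incident to `i` are selected, then `i ∼ j ↔ (i = j ∨ y i j = 1)` is an equivalence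
relation whose classes are `k`-plexes of `G`. -/
theorem Fks_feasible_iff_kplex_partition {V : Type*} [Fintype V] [DecidableEq V]
    (G : SimpleGraph V) [DecidableRel G.Adj] (k : ℕ) (hk : 0 < k)
    (y : V → V → ℕ)
    (hsymm : ∀ i j : V, y i j = y j i)
    (hbin : ∀ i j : V, y i j = 0 ∨ y i j = 1)
    (htri₁ : ∀ i j l : V, i ≠ j → j ≠ l → i ≠ l → y i j + y j l ≤ 1 + y i l)
    (htri₂ : ∀ i j l : V, i ≠ j → j ≠ l → i ≠ l → y i j + y i l ≤ 1 + y j l)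
    (htri₃ : ∀ i j l : V, i ≠ j → j ≠ l → i ≠ l → y j l + y i l ≤ 1 + y i j)
    (hnode : ∀ i : V,
      (Finset.univ.filter (fun j => j ≠ i ∧ ¬ G.Adj i j ∧ y i j = 1)).card ≤ k - 1) :
    Equivalence (fun i j : V => i = j ∨ y i j = 1) ∧
    (∀ i : V, IsKPlex G k (Finset.univ.filter (fun j => i = j ∨ y i j = 1))) := by
  have htr : ∀ a b c : V, (a = b ∨ y a b = 1) → (b = c ∨ y b c = 1) → (a = c ∨ y a c = 1) := by
    intro a b c hab hbc
    by_cases h1 : a = b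
    · subst h1; exact hbc
    by_cases h2 : b = c
    · subst h2; exact hab
    by_cases h3 : a = c
    · exact Or.inl h3
    have := htri₁ a b c h1 h2 h3
    have := hbin a c
    have := hab.resolve_left h1
    have := hbc.resolve_left h2
    right
    omega
  have hsy : ∀ a b : V, (a = b ∨ y a b = 1) → (b = a ∨ y b a = 1) := by
    intro a b h
    rcases h with h | h
    · exact Or.inl h.symm
    · exact Or.inr (by rw [hsymm]; exact h)
  refine ⟨⟨fun _ => Or.inl rfl, fun {a b} h => hsy a b h, fun {a b c} h h' => htr a b c h h'⟩, ?_⟩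
  intro i v hv
  set S := Finset.univ.filter (fun j => i = j ∨ y i j = 1) with hS
  have hv' : i = v ∨ y i v = 1 := by simpa [hS] using hv
  have hsub : S.filter (fun j => ¬ G.Adj v j) ⊆
      insert v (Finset.univ.filter (fun j => j ≠ v ∧ ¬ G.Adj v j ∧ y v j = 1)) := by
    intro j hj
    rw [Finset.mem_filter] at hj
    obtain ⟨hjS, hadj⟩ := hj
    have hj' : i = j ∨ y i j = 1 := by simpa [hS] using hjS
    rw [Finset.mem_insert, Finset.mem_filter]
    by_cases h : j = v
    · exact Or.inl h
    · have := (htr v i j (hsy i v hv') hj').resolve_left (fun e => h e.symm)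
      exact Or.inr ⟨Finset.mem_univ _, h, hadj, this⟩
  have h1 := Finset.card_le_card hsub
  have h2 := Finset.card_insert_le v
    (Finset.univ.filter (fun j => j ≠ v ∧ ¬ G.Adj v j ∧ y v j = 1))
  have h3 := hnode v
  have h4 := Finset.card_filter_add_card_filter_not (s := S) (fun j => G.Adj v j)
  omega
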